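/- arXiv:2111.09702 — 2 statements merged into one kernel-verified Lean document; each statement's English description precedes it below -/
import Mathlib

section
/- For every n ≥ 1, any set of fewer than ⌈n/2⌉ lines fails to intersect all cells of the n × n chessboard; consequently h_n = ⌈n/2⌉, where h_n is the minimum number of lines hitting all cells. -/
open scoped Classical

/-- The closed cell `c i j` (indices in `{1,…,n}`) of the `n × n` chessboard on `[-1,1]²`. -/
def cell (n i j : ℕ) : Set (ℝ × ℝ) :=
  Set.Icc (-1 + ((i : ℝ) - 1) * (2 / n)) (-1 + (i : ℝ) * (2 / n)) ×ˢ
    Set.Icc (-1 + ((j : ℝ) - 1) * (2 / n)) (-1 + (j : ℝ) * (2 / n))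

/-- A subset of the plane is a line. -/
def IsLine (L : Set (ℝ × ℝ)) : Prop :=
  ∃ a b c : ℝ, (a, b) ≠ (0, 0) ∧ L = {p : ℝ × ℝ | a * p.1 + b * p.2 = c}

/-- A line pierces a cell if it meets its interior. -/
def Pierces (L s : Set (ℝ × ℝ)) : Prop := (L ∩ interior s).Nonempty

/-- The index set `{1,…,n} × {1,…,n}`. -/
def Idx (n : ℕ) : Finset (ℕ × ℕ) := Finset.Icc 1 n ×ˢ Finset.Icc 1 n

/-!
In the `ℓ∞` plane `ℝ × ℝ` two points of a cell are at distance at most `2 / n`, so the lower bound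
reduces to the plank theorem of Ball: if `w i ≥ 0` and `∑ i, w i < 1`, some point of the unit ball
is at distance greater than `w i` from the `i`-th line.

Write the lines as `a i * x + b i * y = c i` with `|a i| + |b i| = 1`. For every inner product
`l * x * x' + m * y * y'` with `l, m > 0`, Bang's sign lemma yields a point far from all the lines,
whose coordinates are bounded in absolute value by sums `X` and `Y`. The Cauchy-Schwarz inequality
gives `m * X + l * Y ≤ (l + m) * ∑ i, w i`, so both coordinates are small once `X = Y`. As `l : m`
runs from `0` to `∞`, either some inner product already gives `X, Y ≤ 1`, or `X - Y` changes sign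
and the intermediate value theorem applies.

Conversely, the right edges of the odd columns span vertical lines that hit all the cells.
-/

open Filter Finset
open scoped Matrix Topology

section Bang

theorem finite_setOf_forall_abs_eq {ι G : Type*} [Finite ι] [AddCommGroup G] [LinearOrder G]
    (ω : ι → G) : {v : ι → G | ∀ i, |v i| = ω i}.Finite := by
  have finite_abs_eq (x : G) : {y : G | |y| = x}.Finite :=
    (Set.toFinite {x, -x}).subset fun y (hy : |y| = x) => hy ▸ by
      rcases abs_choice y with h | h <;> simp [h]
  exact Set.Finite.pi' fun i => finite_abs_eq (ω i)

variable {ι R : Type*} [Fintype ι] [CommRing R]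

/-- The quadratic energy whose maximum over the sign choices `|v i| = ω i` yields Bang's lemma. -/
def bangEnergy (B : Matrix ι ι R) (c v : ι → R) : R :=
  v ⬝ᵥ B *ᵥ v - 2 * (c ⬝ᵥ v)

theorem bangEnergy_add_single {B : Matrix ι ι R} (hB : B.IsSymm) (c v : ι → R) (k : ι) (h : R) :
    bangEnergy B c (v + Pi.single k h) =
      bangEnergy B c v + 2 * h * ((B *ᵥ v) k - c k) + h ^ 2 * B k k := by
  have cross : v ⬝ᵥ B *ᵥ Pi.single k h = (B *ᵥ v) k * h := by
    rw [Matrix.dotProduct_mulVec, ← Matrix.mulVec_transpose, hB.eq, dotProduct_single]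
  have diag : (B *ᵥ Pi.single k h) k = B k k * h := by
    simp only [Matrix.mulVec, dotProduct_single]
  simp only [bangEnergy, Matrix.mulVec_add, dotProduct_add, add_dotProduct, single_dotProduct,
    dotProduct_single, cross, diag]
  ring

variable [LinearOrder R] [IsStrictOrderedRing R]

theorem exists_abs_eq_forall_mul_diag_le_abs_mulVec_sub {B : Matrix ι ι R} (hB : B.IsSymm)
    {ω : ι → R} (hω : ∀ i, 0 ≤ ω i) (c : ι → R) :
    ∃ v : ι → R, (∀ i, |v i| = ω i) ∧ ∀ k, ω k * B k k ≤ |(B *ᵥ v) k - c k| := by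
  obtain ⟨v, hv, hmax⟩ := Set.exists_max_image _ (bangEnergy B c)
    (finite_setOf_forall_abs_eq ω) ⟨ω, fun i => abs_of_nonneg (hω i)⟩
  refine ⟨v, hv, fun k => ?_⟩
  have flip_mem (i : ι) : |(v + Pi.single k (-2 * v k) : ι → R) i| = ω i := by
    rcases eq_or_ne i k with rfl | hik
    · rw [← hv i, Pi.add_apply, Pi.single_eq_same, ← abs_neg]
      ring_nf
    · rw [Pi.add_apply, Pi.single_eq_of_ne hik, add_zero, hv i]
  have flip_le := hmax _ flip_mem
  rw [bangEnergy_add_single hB] at flip_le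
  rcases (hω k).eq_or_lt with hk | hk
  · rw [← hk, zero_mul]
    exact abs_nonneg _
  refine le_of_mul_le_mul_left ?_ hk
  calc ω k * (ω k * B k k) = v k ^ 2 * B k k := by rw [← hv k, ← sq_abs]; ring
    _ ≤ v k * ((B *ᵥ v) k - c k) := by linarith
    _ ≤ |v k * ((B *ᵥ v) k - c k)| := le_abs_self _
    _ = ω k * |(B *ᵥ v) k - c k| := by rw [abs_mul, hv k]

end Bang

section Plank

theorem mul_mul_add_abs_sq_le (l m x y : ℝ) :
    l * m * (|x| + |y|) ^ 2 ≤ (l + m) * (l * x ^ 2 + m * y ^ 2) := by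
  rw [← sq_abs x, ← sq_abs y]
  linarith [sq_nonneg (l * |x| - m * |y|)]

theorem mul_sq_add_mul_sq_pos {l m x y : ℝ} (hl : 0 < l) (hm : 0 < m) (hxy : |x| + |y| ≠ 0) :
    0 < l * x ^ 2 + m * y ^ 2 := by
  have h : 0 < l * m * (|x| + |y|) ^ 2 := by positivity
  exact pos_of_mul_pos_right (h.trans_le (mul_mul_add_abs_sq_le l m x y)) (add_pos hl hm).le

variable {ι : Type*} [Fintype ι] {w a b : ι → ℝ}

/-- The triangle-inequality bound for the first coordinate of the point
`(l * ∑ i, v i * a i, m * ∑ i, v i * b i)`, where `v` comes from Bang's lemma for the Gram matrix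
of the vectors `(a i, b i)` under the inner product `l * x * x' + m * y * y'`. The bound for the
second coordinate is `bangBound w b a m l`. -/
noncomputable def bangBound (w a b : ι → ℝ) (l m : ℝ) : ℝ :=
  ∑ i, w i / (l * a i ^ 2 + m * b i ^ 2) * (l * |a i|)

theorem abs_mul_dotProduct_le_bangBound {v : ι → ℝ} {l m : ℝ} (hl : 0 ≤ l)
    (hv : ∀ i, |v i| = w i / (l * a i ^ 2 + m * b i ^ 2)) :
    |l * (a ⬝ᵥ v)| ≤ bangBound w a b l m := by
  rw [dotProduct, mul_sum]
  refine (abs_sum_le_sum_abs _ _).trans_eq (sum_congr rfl fun i _ => ?_)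
  rw [abs_mul, abs_mul, abs_of_nonneg hl, hv]
  ring

theorem mul_bangBound_add_mul_bangBound_le (hw : ∀ i, 0 ≤ w i) (hab : ∀ i, |a i| + |b i| = 1)
    {l m : ℝ} (hl : 0 < l) (hm : 0 < m) :
    m * bangBound w a b l m + l * bangBound w b a m l ≤ (l + m) * ∑ i, w i := by
  simp only [bangBound, mul_sum, ← sum_add_distrib]
  refine sum_le_sum fun i _ => ?_
  have hS := mul_sq_add_mul_sq_pos hl hm ((hab i).trans_ne one_ne_zero)
  have key : l * m / (l * a i ^ 2 + m * b i ^ 2) ≤ l + m := by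
    rw [div_le_iff₀ hS]
    simpa only [hab i, one_pow, mul_one] using mul_mul_add_abs_sq_le l m (a i) (b i)
  calc m * (w i / (l * a i ^ 2 + m * b i ^ 2) * (l * |a i|)) +
        l * (w i / (m * b i ^ 2 + l * a i ^ 2) * (m * |b i|))
      = l * m / (l * a i ^ 2 + m * b i ^ 2) * w i * (|a i| + |b i|) := by
        rw [add_comm (m * b i ^ 2)]
        ring
    _ = l * m / (l * a i ^ 2 + m * b i ^ 2) * w i := by rw [hab i, mul_one]
    _ ≤ (l + m) * w i := mul_le_mul_of_nonneg_right key (hw i)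

theorem bangBound_le_sum_of_eq (hw : ∀ i, 0 ≤ w i) (hab : ∀ i, |a i| + |b i| = 1)
    {l m : ℝ} (hl : 0 < l) (hm : 0 < m) (h : bangBound w a b l m = bangBound w b a m l) :
    bangBound w a b l m ≤ ∑ i, w i := by
  have hmean := mul_bangBound_add_mul_bangBound_le hw hab hl hm
  rw [← h, ← add_mul, add_comm m] at hmean
  exact le_of_mul_le_mul_left hmean (add_pos hl hm)

theorem tendsto_bangBound_zero (hab : ∀ i, |a i| + |b i| = 1) :
    Tendsto (fun s => bangBound w a b s (1 - s)) (𝓝[>] 0) (𝓝 (∑ i with b i = 0, w i)) := by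
  rw [sum_filter]
  refine tendsto_finsetSum _ fun i _ => ?_
  split_ifs with hb
  · have ha : |a i| = 1 := by simpa only [hb, abs_zero, add_zero] using hab i
    refine tendsto_const_nhds.congr' ?_
    filter_upwards [self_mem_nhdsWithin] with s (hs : 0 < s)
    rw [← sq_abs (a i), ha, hb]
    simp [hs.ne']
  · have hcont : ContinuousAt
        (fun s => w i / (s * a i ^ 2 + (1 - s) * b i ^ 2) * (s * |a i|)) 0 :=
      .mul (.div (by fun_prop) (by fun_prop) (by simpa using hb)) (by fun_prop)
    simpa using hcont.tendsto.mono_left nhdsWithin_le_nhds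

theorem eventually_bangBound_lt_one (hw : ∀ i, 0 ≤ w i) (hsum : ∑ i, w i < 1)
    (hab : ∀ i, |a i| + |b i| = 1) : ∀ᶠ s in 𝓝[>] 0, bangBound w a b s (1 - s) < 1 :=
  (tendsto_bangBound_zero hab).eventually_lt_const <|
    (sum_le_sum_of_subset_of_nonneg (filter_subset _ _) fun i _ _ => hw i).trans_lt hsum

theorem continuousOn_bangBound (hab : ∀ i, |a i| + |b i| = 1) :
    ContinuousOn (fun p : ℝ × ℝ => bangBound w a b p.1 p.2) (Set.Ioi 0 ×ˢ Set.Ioi 0) :=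
  continuousOn_finsetSum _ fun i _ =>
    .mul (.div (by fun_prop) (by fun_prop)
      fun _ hp => (mul_sq_add_mul_sq_pos hp.1 hp.2 ((hab i).trans_ne one_ne_zero)).ne')
      (by fun_prop)

theorem exists_bangBound_le_one (hw : ∀ i, 0 ≤ w i) (hsum : ∑ i, w i < 1)
    (hab : ∀ i, |a i| + |b i| = 1) :
    ∃ l m : ℝ, 0 < l ∧ 0 < m ∧ bangBound w a b l m ≤ 1 ∧ bangBound w b a m l ≤ 1 := by
  have hba (i : ι) : |b i| + |a i| = 1 := by rw [add_comm, hab i]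
  obtain ⟨s, ⟨hX, hY⟩, hs0, hs⟩ := ((eventually_bangBound_lt_one hw hsum hab).and
    (eventually_bangBound_lt_one hw hsum hba) |>.and (Ioo_mem_nhdsGT one_half_pos)).exists
  rcases le_total (bangBound w b a (1 - s) s) 1 with hY' | hY'
  · exact ⟨s, 1 - s, hs0, by linarith, hX.le, hY'⟩
  rcases le_total (bangBound w a b (1 - s) s) 1 with hX' | hX'
  · exact ⟨1 - s, s, by linarith, hs0, hX', hY.le⟩
  have hpos (t : ℝ) (ht : t ∈ Set.Icc s (1 - s)) : 0 < t ∧ 0 < 1 - t :=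
    ⟨by linarith [ht.1], by linarith [ht.2]⟩
  obtain ⟨t, ht, hbal⟩ : ∃ t ∈ Set.Icc s (1 - s),
      bangBound w a b t (1 - t) = bangBound w b a (1 - t) t := by
    refine isPreconnected_Icc.intermediate_value₂
      (Set.left_mem_Icc.2 (by linarith)) (Set.right_mem_Icc.2 (by linarith))
      ((continuousOn_bangBound hab).comp (f := fun t => (t, 1 - t)) (by fun_prop) hpos)
      ((continuousOn_bangBound hba).comp (f := fun t => (1 - t, t)) (by fun_prop)
        fun t ht => (hpos t ht).symm) (hX.le.trans hY') ?_
    simpa only [sub_sub_cancel] using hY.le.trans hX'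
  obtain ⟨ht0, ht1⟩ := hpos t ht
  have hle := (bangBound_le_sum_of_eq hw hab ht0 ht1 hbal).trans hsum.le
  exact ⟨t, 1 - t, ht0, ht1, hle, hbal ▸ hle⟩

theorem exists_norm_le_one_forall_le_abs_mul_add_mul_sub (hw : ∀ i, 0 ≤ w i) (hsum : ∑ i, w i < 1)
    (hab : ∀ i, |a i| + |b i| = 1) (c : ι → ℝ) :
    ∃ z : ℝ × ℝ, ‖z‖ ≤ 1 ∧ ∀ i, w i ≤ |a i * z.1 + b i * z.2 - c i| := by
  obtain ⟨l, m, hl, hm, hX, hY⟩ := exists_bangBound_le_one hw hsum hab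
  have hS (i : ι) := mul_sq_add_mul_sq_pos hl hm ((hab i).trans_ne one_ne_zero)
  let B : Matrix ι ι ℝ := l • Matrix.vecMulVec a a + m • Matrix.vecMulVec b b
  have hB : B.IsSymm := by
    simp [B, Matrix.IsSymm, Matrix.transpose_vecMulVec]
  obtain ⟨v, hv, hfar⟩ := exists_abs_eq_forall_mul_diag_le_abs_mulVec_sub hB
    (fun i => div_nonneg (hw i) (hS i).le) c
  refine ⟨(l * (a ⬝ᵥ v), m * (b ⬝ᵥ v)), norm_prod_le_iff.2 ⟨?_, ?_⟩, fun k => ?_⟩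
  · exact (abs_mul_dotProduct_le_bangBound hl.le hv).trans hX
  · refine (abs_mul_dotProduct_le_bangBound hm.le fun i => ?_).trans hY
    rw [hv, add_comm]
  · have hdiag : w k / (l * a k ^ 2 + m * b k ^ 2) * B k k = w k := by
      have : B k k = l * a k ^ 2 + m * b k ^ 2 := by
        simp [B, Matrix.vecMulVec_apply, sq]
      rw [this, div_mul_cancel₀ _ (hS k).ne']
    have hmul : (B *ᵥ v) k = a k * (l * (a ⬝ᵥ v)) + b k * (m * (b ⬝ᵥ v)) := by
      simp [B, Matrix.add_mulVec, Matrix.smul_mulVec, Matrix.vecMulVec_mulVec]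
      ring
    simpa only [hdiag, hmul] using hfar k

theorem exists_norm_le_one_forall_lt_abs_mul_add_mul_sub (hw : ∀ i, 0 ≤ w i) (hsum : ∑ i, w i < 1)
    (hab : ∀ i, |a i| + |b i| = 1) (c : ι → ℝ) :
    ∃ z : ℝ × ℝ, ‖z‖ ≤ 1 ∧ ∀ i, w i < |a i * z.1 + b i * z.2 - c i| := by
  have hcont : Continuous fun δ : ℝ => ∑ i, (w i + δ) := by fun_prop
  obtain ⟨δ, hδsum, hδ : 0 < δ⟩ :=
    (((hcont.tendsto' 0 _ (by simp)).mono_left nhdsWithin_le_nhds).eventually_lt_const hsum |>.and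
      (self_mem_nhdsWithin (s := Set.Ioi 0))).exists
  obtain ⟨z, hz, hfar⟩ :=
    exists_norm_le_one_forall_le_abs_mul_add_mul_sub (fun i => add_nonneg (hw i) hδ.le) hδsum hab c
  exact ⟨z, hz, fun i => (lt_add_of_pos_right _ hδ).trans_le (hfar i)⟩

theorem abs_mul_add_mul_le_mul_norm (x y : ℝ) (z : ℝ × ℝ) :
    |x * z.1 + y * z.2| ≤ (|x| + |y|) * ‖z‖ :=
  calc |x * z.1 + y * z.2| ≤ |x| * ‖z.1‖ + |y| * ‖z.2‖ := by
        simpa only [abs_mul, Real.norm_eq_abs] using abs_add_le (x * z.1) (y * z.2)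
    _ ≤ |x| * ‖z‖ + |y| * ‖z‖ := by
        gcongr
        exacts [norm_fst_le z, norm_snd_le z]
    _ = (|x| + |y|) * ‖z‖ := (add_mul _ _ _).symm

end Plank

theorem IsLine.exists_abs_add_abs_eq_one {L : Set (ℝ × ℝ)} (hL : IsLine L) :
    ∃ a b c : ℝ, |a| + |b| = 1 ∧ ∀ p, p ∈ L ↔ a * p.1 + b * p.2 = c := by
  obtain ⟨a, b, c, hab, rfl⟩ := hL
  have hN : 0 < |a| + |b| := by
    contrapose! hab
    have := abs_nonneg a
    have := abs_nonneg b
    exact Prod.ext (abs_eq_zero.1 (by linarith)) (abs_eq_zero.1 (by linarith))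
  refine ⟨a / (|a| + |b|), b / (|a| + |b|), c / (|a| + |b|), ?_, fun p => ?_⟩
  · rw [abs_div, abs_div, abs_of_pos hN, ← add_div, div_self hN.ne']
  · rw [div_mul_eq_mul_div, div_mul_eq_mul_div, ← add_div, div_left_inj' hN.ne']
    rfl

theorem exists_norm_le_one_forall_lt_dist_of_isLine {ι : Type*} [Fintype ι]
    {L : ι → Set (ℝ × ℝ)} (hL : ∀ i, IsLine (L i)) {w : ι → ℝ} (hw : ∀ i, 0 ≤ w i)
    (hsum : ∑ i, w i < 1) :
    ∃ z : ℝ × ℝ, ‖z‖ ≤ 1 ∧ ∀ i, ∀ p ∈ L i, w i < dist z p := by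
  choose a b c hab hc using fun i => (hL i).exists_abs_add_abs_eq_one
  obtain ⟨z, hz, hfar⟩ := exists_norm_le_one_forall_lt_abs_mul_add_mul_sub hw hsum hab c
  refine ⟨z, hz, fun i p hp => (hfar i).trans_le ?_⟩
  calc |a i * z.1 + b i * z.2 - c i| = |a i * (z - p).1 + b i * (z - p).2| := by
        rw [← (hc i p).1 hp, Prod.fst_sub, Prod.snd_sub]
        ring_nf
    _ ≤ (|a i| + |b i|) * ‖z - p‖ := abs_mul_add_mul_le_mul_norm _ _ _
    _ = dist z p := by rw [hab i, one_mul, dist_eq_norm]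

section Chessboard

variable {n : ℕ}

theorem dist_le_of_mem_cell {i j : ℕ} {z p : ℝ × ℝ} (hz : z ∈ cell n i j) (hp : p ∈ cell n i j) :
    dist z p ≤ 2 / n := by
  refine max_le ((Real.dist_le_of_mem_Icc hz.1 hp.1).trans_eq ?_)
    ((Real.dist_le_of_mem_Icc hz.2 hp.2).trans_eq ?_) <;> ring

theorem exists_mem_Icc_of_abs_le_one (hn : 1 ≤ n) {x : ℝ} (hx : |x| ≤ 1) :
    ∃ i ∈ Icc 1 n, x ∈ Set.Icc (-1 + ((i : ℝ) - 1) * (2 / n)) (-1 + (i : ℝ) * (2 / n)) := by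
  have hn0 : (0 : ℝ) < n := by exact_mod_cast hn
  obtain ⟨hx0, hx1⟩ := abs_le.1 hx
  obtain ⟨y, rfl⟩ : ∃ y : ℝ, x = -1 + y * (2 / n) := ⟨(x + 1) * n / 2, by field_simp; ring⟩
  have hside : (0 : ℝ) < 2 / n := by positivity
  have hy0 : 0 ≤ y := nonneg_of_mul_nonneg_left (by linarith) hside
  have hyn : y ≤ n := by
    refine le_of_mul_le_mul_right ?_ hside
    rw [mul_div_cancel₀ _ hn0.ne']
    linarith
  refine ⟨max 1 ⌈y⌉₊, mem_Icc.2 ⟨le_max_left _ _, max_le hn (Nat.ceil_le.2 hyn)⟩, ?_, ?_⟩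
  · gcongr
    rw [Nat.cast_max, sub_le_iff_le_add, max_le_iff, Nat.cast_one]
    exact ⟨by linarith, (Nat.ceil_lt_add_one hy0).le⟩
  · gcongr
    exact (Nat.le_ceil y).trans (by exact_mod_cast le_max_right _ _)

theorem exists_mem_cell_of_norm_le_one (hn : 1 ≤ n) {z : ℝ × ℝ} (hz : ‖z‖ ≤ 1) :
    ∃ ij ∈ Idx n, z ∈ cell n ij.1 ij.2 := by
  obtain ⟨hz1, hz2⟩ := norm_prod_le_iff.1 hz
  obtain ⟨i, hi, hzi⟩ := exists_mem_Icc_of_abs_le_one hn hz1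
  obtain ⟨j, hj, hzj⟩ := exists_mem_Icc_of_abs_le_one hn hz2
  exact ⟨(i, j), mem_product.2 ⟨hi, hj⟩, hzi, hzj⟩

theorem exists_cell_forall_inter_eq_empty {F : Finset (Set (ℝ × ℝ))} (hF : ∀ L ∈ F, IsLine L)
    (hcard : #F < (n + 1) / 2) : ∃ ij ∈ Idx n, ∀ L ∈ F, L ∩ cell n ij.1 ij.2 = ∅ := by
  have hn : 1 ≤ n := by omega
  have hn0 : (0 : ℝ) < n := by exact_mod_cast hn
  have hsum : ∑ _L : F, (2 / n : ℝ) < 1 := by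
    have : #F * 2 < n := by omega
    rw [sum_const, card_univ, Fintype.card_coe, nsmul_eq_mul, ← mul_div_assoc, div_lt_one hn0]
    exact_mod_cast this
  obtain ⟨z, hz, hfar⟩ := exists_norm_le_one_forall_lt_dist_of_isLine
    (fun L : F => hF L L.2) (fun _ => by positivity) hsum
  obtain ⟨ij, hij, hzij⟩ := exists_mem_cell_of_norm_le_one hn hz
  refine ⟨ij, hij, fun L hL => Set.eq_empty_of_forall_notMem fun p ⟨hpL, hpc⟩ => ?_⟩
  exact (dist_le_of_mem_cell hzij hpc).not_gt (hfar ⟨L, hL⟩ p hpL)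

/-- The vertical line of abscissa `t`. -/
def verticalLine (t : ℝ) : Set (ℝ × ℝ) := {p | p.1 = t}

theorem isLine_verticalLine (t : ℝ) : IsLine (verticalLine t) :=
  ⟨1, 0, t, by simp, by simp [verticalLine]⟩

theorem verticalLine_injective : Function.Injective verticalLine := fun s t h =>
  show (s, (0 : ℝ)) ∈ verticalLine t from h ▸ rfl

theorem verticalLine_inter_cell_nonempty {i j k : ℕ} (hki : k ≤ i) (hik : i ≤ k + 1) :
    (verticalLine (-1 + k * (2 / n)) ∩ cell n i j).Nonempty := by
  have hki' : (k : ℝ) ≤ i := by exact_mod_cast hki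
  have hik' : (i : ℝ) - 1 ≤ k := by rw [sub_le_iff_le_add]; exact_mod_cast hik
  refine ⟨(-1 + k * (2 / n), -1 + j * (2 / n)), rfl, ⟨?_, ?_⟩, ?_, le_rfl⟩
  · dsimp only; gcongr
  · dsimp only; gcongr
  · dsimp only; gcongr; linarith

theorem exists_lines_forall_inter_cell_nonempty (hn : 1 ≤ n) :
    ∃ F : Finset (Set (ℝ × ℝ)), #F = (n + 1) / 2 ∧ (∀ L ∈ F, IsLine L) ∧
      ∀ ij ∈ Idx n, ∃ L ∈ F, (L ∩ cell n ij.1 ij.2).Nonempty := by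
  let f (k : ℕ) : Set (ℝ × ℝ) := verticalLine (-1 + (2 * k + 1 : ℕ) * (2 / n))
  have hf : Function.Injective f := fun k l h => by
    have hside : (2 / n : ℝ) ≠ 0 := by positivity
    have := mul_right_cancel₀ hside (add_left_cancel (verticalLine_injective h))
    have := Nat.cast_injective this
    omega
  refine ⟨(range ((n + 1) / 2)).image f, ?_, ?_, ?_⟩
  · rw [card_image_of_injective _ hf, card_range]
  · simp only [mem_image, forall_exists_index, and_imp]
    rintro _ k - rfl
    exact isLine_verticalLine _
  · rintro ⟨i, j⟩ hij
    obtain ⟨hi, -⟩ := mem_product.1 hij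
    obtain ⟨hi1, hin⟩ := mem_Icc.1 hi
    exact ⟨f ((i - 1) / 2), mem_image_of_mem f (mem_range.2 (by omega)),
      verticalLine_inter_cell_nonempty (by omega) (by omega)⟩

end Chessboard

/-- Fewer than `⌈n/2⌉` lines cannot hit all cells; hence `h_n = ⌈n/2⌉`. -/
theorem hitting_eq (n : ℕ) (hn : 1 ≤ n) :
    (∀ F : Finset (Set (ℝ × ℝ)), (∀ L ∈ F, IsLine L) → F.card < (n + 1) / 2 →
      ∃ ij ∈ Idx n, ∀ L ∈ F, L ∩ cell n ij.1 ij.2 = ∅) ∧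
    IsLeast {m : ℕ | ∃ F : Finset (Set (ℝ × ℝ)), F.card = m ∧ (∀ L ∈ F, IsLine L) ∧
      ∀ ij ∈ Idx n, ∃ L ∈ F, (L ∩ cell n ij.1 ij.2).Nonempty} ((n + 1) / 2) := by
  refine ⟨fun F hF hcard => exists_cell_forall_inter_eq_empty hF hcard,
    exists_lines_forall_inter_cell_nonempty hn, ?_⟩
  rintro _ ⟨F, rfl, hF, hhit⟩
  by_contra! hcard
  obtain ⟨ij, hij, hmiss⟩ := exists_cell_forall_inter_eq_empty hF hcard
  obtain ⟨L, hL, hne⟩ := hhit ij hij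
  exact hne.ne_empty (hmiss L hL)
end

section
/- For sufficiently large n, p_n > 2n/3 - 1, where p_n is the minimum number of lines piercing all cells of the n × n chessboard. More precisely, for every ε > 0, p_n > (2/3 - ε)n for all sufficiently large n. -/
open scoped Classical

/-!
Linear programming duality: if the cells carry nonnegative weights such that the cells pierced by
any single line weigh at most `M` together, then a covering family has at least (total weight) / `M`
lines. The weights come from a density on the board. Reflecting the board if necessary, a line is
nondecreasing in both coordinates, so the cells it pierces form a chain and are spaced by at least
`2 / n` in the coordinate sum. Their weight is therefore, up to `O(1 / n)`, at most the integral of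
the density along the line with respect to `d(x + y)`, and an explicit computation bounds this
integral by `8 / 5`. The total weight is about `49n / 45`, whence at least about `49n / 72` lines.
-/

/-! ### The density -/

/-- The function `x²` frozen at its value `1` outside `[-1, 1]`, which makes it bounded and
Lipschitz on the whole line. -/
noncomputable def clippedSq (x : ℝ) : ℝ := (min |x| 1) ^ 2

lemma clippedSq_of_abs_le_one {x : ℝ} (hx : |x| ≤ 1) : clippedSq x = x ^ 2 := by
  rw [clippedSq, min_eq_left hx, sq_abs]

lemma clippedSq_neg (x : ℝ) : clippedSq (-x) = clippedSq x := by
  rw [clippedSq, clippedSq, abs_neg]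

lemma clippedSq_nonneg (x : ℝ) : 0 ≤ clippedSq x := sq_nonneg _

lemma clippedSq_le_one (x : ℝ) : clippedSq x ≤ 1 :=
  pow_le_one₀ (le_min (abs_nonneg x) zero_le_one) (min_le_right _ _)

lemma abs_clippedSq_sub_le (x y : ℝ) : |clippedSq x - clippedSq y| ≤ 2 * |x - y| := by
  have hmin : |min |x| 1 - min |y| 1| ≤ |x - y| := by
    refine (abs_min_sub_min_le_max _ _ _ _).trans (max_le (abs_abs_sub_abs_le x y) ?_)
    simp only [sub_self, abs_zero, abs_nonneg]
  have hsum : |min |x| 1 + min |y| 1| ≤ 2 := by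
    rw [abs_of_nonneg (by positivity)]
    linarith [min_le_right |x| 1, min_le_right |y| 1]
  rw [clippedSq, clippedSq, sq_sub_sq, abs_mul]
  exact mul_le_mul hsum hmin (abs_nonneg _) zero_le_two

/-- The weight density of the dual argument. On the board it is `x² - 2x²y² + y²`, which up to a
factor is the density `μ₁` of the paper, plus `1 / 10`: with `μ₁` alone the two sides of the duality
inequality balance at exactly `2n / 3`, and the added constant creates the room that absorbs the
discretisation error. -/
noncomputable def density (x y : ℝ) : ℝ :=
  1 / 10 + clippedSq x + clippedSq y - 2 * clippedSq x * clippedSq y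

lemma density_swap (x y : ℝ) : density x y = density y x := by
  unfold density
  ring

lemma density_nonneg (x y : ℝ) : 0 ≤ density x y := by
  unfold density
  nlinarith [clippedSq_nonneg x, clippedSq_nonneg y, clippedSq_le_one x, clippedSq_le_one y]

lemma density_le (x y : ℝ) : density x y ≤ 11 / 10 := by
  unfold density
  nlinarith [clippedSq_nonneg x, clippedSq_nonneg y, clippedSq_le_one x, clippedSq_le_one y]

lemma abs_density_sub_le (x y x' y' : ℝ) :
    |density x y - density x' y'| ≤ 2 * (|x - x'| + |y - y'|) := by
  have hfactor (z : ℝ) : |1 - 2 * clippedSq z| ≤ 1 :=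
    abs_le.2 ⟨by linarith [clippedSq_le_one z], by linarith [clippedSq_nonneg z]⟩
  have hterm (z s t : ℝ) :
      |(1 - 2 * clippedSq z) * (clippedSq s - clippedSq t)| ≤ 2 * |s - t| := by
    rw [abs_mul]
    exact (mul_le_of_le_one_left (abs_nonneg _) (hfactor z)).trans (abs_clippedSq_sub_le s t)
  calc |density x y - density x' y'|
      = |(1 - 2 * clippedSq y) * (clippedSq x - clippedSq x')
          + (1 - 2 * clippedSq x') * (clippedSq y - clippedSq y')| := by
        unfold density
        ring_nf
    _ ≤ 2 * |x - x'| + 2 * |y - y'| :=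
        (abs_add_le _ _).trans (add_le_add (hterm y x x') (hterm x' y y'))
    _ = 2 * (|x - x'| + |y - y'|) := by ring

lemma density_of_abs_le_one {x y : ℝ} (hx : |x| ≤ 1) (hy : |y| ≤ 1) :
    density x y = 1 / 10 + x ^ 2 + y ^ 2 - 2 * x ^ 2 * y ^ 2 := by
  rw [density, clippedSq_of_abs_le_one hx, clippedSq_of_abs_le_one hy]

/-! ### Integrals of the density along segments -/

/-- The mean of the density over a segment inside the board with midpoint `(x, y)` and endpoints
`(x - p, y - q)`, `(x + p, y + q)`. -/
noncomputable def segmentMean (x y p q : ℝ) : ℝ :=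
  1 / 10 + x ^ 2 + p ^ 2 / 3 + y ^ 2 + q ^ 2 / 3
    - 2 * (x ^ 2 * y ^ 2 + (x ^ 2 * q ^ 2 + 4 * x * y * p * q + y ^ 2 * p ^ 2) / 3
      + p ^ 2 * q ^ 2 / 5)

lemma integral_quartic_symmetric (c₀ c₁ c₂ c₃ c₄ r : ℝ) :
    ∫ t in -r..r, (c₀ + c₁ * t + c₂ * t ^ 2 + c₃ * t ^ 3 + c₄ * t ^ 4) =
      2 * r * (c₀ + c₂ * r ^ 2 / 3 + c₄ * r ^ 4 / 5) := by
  have hderiv : ∀ t ∈ Set.uIcc (-r) r, HasDerivAt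
      (fun t ↦ c₀ * t + c₁ * (t ^ 2 / 2) + c₂ * (t ^ 3 / 3) + c₃ * (t ^ 4 / 4) + c₄ * (t ^ 5 / 5))
      (c₀ + c₁ * t + c₂ * t ^ 2 + c₃ * t ^ 3 + c₄ * t ^ 4) t := by
    intro t _
    have hpow (k : ℕ) := (hasDerivAt_pow k t).div_const (k : ℝ)
    refine ((((((hasDerivAt_id' t).const_mul c₀).add ((hpow 2).const_mul c₁)).add
      ((hpow 3).const_mul c₂)).add ((hpow 4).const_mul c₃)).add
        ((hpow 5).const_mul c₄)).congr_deriv ?_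
    push_cast
    ring
  rw [intervalIntegral.integral_eq_sub_of_hasDerivAt hderiv
    (Continuous.intervalIntegrable (by fun_prop) _ _)]
  ring

lemma integral_density_eq_mul_segmentMean {x y d e m r : ℝ}
    (hmem : ∀ t ∈ Set.uIcc (-r) r, |x + d * t| ≤ 1 ∧ |y + e * t| ≤ 1) :
    ∫ s in (m - r)..(m + r), density (x + d * (s - m)) (y + e * (s - m)) =
      2 * r * segmentMean x y (d * r) (e * r) := by
  have hpoly : Set.EqOn (fun t ↦ density (x + d * t) (y + e * t))
      (fun t ↦ (1 / 10 + x ^ 2 + y ^ 2 - 2 * x ^ 2 * y ^ 2)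
        + (2 * x * d + 2 * y * e - 4 * x * y * (x * e + y * d)) * t
        + (d ^ 2 + e ^ 2 - 2 * (x ^ 2 * e ^ 2 + 4 * x * y * d * e + y ^ 2 * d ^ 2)) * t ^ 2
        + (-4 * d * e * (x * e + y * d)) * t ^ 3 + (-2 * d ^ 2 * e ^ 2) * t ^ 4)
      (Set.uIcc (-r) r) := by
    intro t ht
    simp only [density_of_abs_le_one (hmem t ht).1 (hmem t ht).2]
    ring
  calc ∫ s in (m - r)..(m + r), density (x + d * (s - m)) (y + e * (s - m))
      = ∫ t in -r..r, density (x + d * t) (y + e * t) := by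
        rw [intervalIntegral.integral_comp_sub_right (fun t ↦ density (x + d * t) (y + e * t)) m,
          sub_sub_cancel_left, add_sub_cancel_left]
    _ = 2 * r * segmentMean x y (d * r) (e * r) := by
        rw [intervalIntegral.integral_congr hpoly, integral_quartic_symmetric, segmentMean]
        ring

lemma segmentMean_left_right_le {y q : ℝ} (hq : 0 ≤ q) (hyq : |y| ≤ 1 - q) :
    2 * (1 + q) * segmentMean 0 y 1 q ≤ 8 / 5 := by
  have hy : y ^ 2 ≤ (1 - q) ^ 2 := sq_le_sq' (abs_le.1 hyq).1 (abs_le.1 hyq).2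
  have hq1 : q ≤ 1 := by linarith [abs_nonneg y]
  calc 2 * (1 + q) * segmentMean 0 y 1 q
      = 2 * (1 + q) * (13 / 30 + y ^ 2 / 3 - q ^ 2 / 15) := by
        unfold segmentMean
        ring
    _ ≤ 2 * (1 + q) * (13 / 30 + (1 - q) ^ 2 / 3 - q ^ 2 / 15) := by gcongr
    _ ≤ 8 / 5 := by
        nlinarith [mul_nonneg hq (sub_nonneg.2 hq1),
          mul_nonneg (mul_nonneg hq hq) (sub_nonneg.2 hq1), sq_nonneg (q - 1 / 5)]

lemma segmentMean_left_top_le {p q : ℝ} (hp : 0 ≤ p) (hq : 0 ≤ q) (hp1 : p ≤ 1) (hq1 : q ≤ 1) :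
    2 * (p + q) * segmentMean (p - 1) (1 - q) p q ≤ 8 / 5 := by
  obtain ⟨s, hs⟩ : ∃ s, s = p + q := ⟨_, rfl⟩
  obtain ⟨t, ht⟩ : ∃ t, t = p * q := ⟨_, rfl⟩
  have hs0 : 0 ≤ s := by linarith
  have hs2 : s ≤ 2 := by linarith
  have ht0 : 0 ≤ t := ht ▸ mul_nonneg hp hq
  have amgm : t ≤ s ^ 2 / 4 := by nlinarith [sq_nonneg (p - q)]
  have hmean : segmentMean (p - 1) (1 - q) p q =
      1 / 10 + 2 * s - 4 / 3 * s ^ 2 + 8 / 3 * t * (s - 1) - 16 / 15 * t ^ 2 := by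
    rw [hs, ht, segmentMean]
    ring
  rw [hmean, ← hs]
  rcases le_total s 1 with hs1 | hs1
  · calc 2 * s * (1 / 10 + 2 * s - 4 / 3 * s ^ 2 + 8 / 3 * t * (s - 1) - 16 / 15 * t ^ 2)
        ≤ 2 * s * (1 / 10 + 2 * s - 4 / 3 * s ^ 2) := by
          refine mul_le_mul_of_nonneg_left ?_ (by positivity)
          nlinarith [mul_nonneg ht0 (sub_nonneg.2 hs1)]
      _ ≤ 8 / 5 := by
          nlinarith [mul_nonneg hs0 (sub_nonneg.2 hs1), mul_nonneg hs0 (sq_nonneg (s - 1)),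
            mul_nonneg (sub_nonneg.2 hs1) (sq_nonneg (s - 1))]
  · have hfactor : 0 ≤ 61 / 60 + 2 / 15 * s - 4 / 15 * s ^ 2 := by
      nlinarith [mul_nonneg hs0 (sub_nonneg.2 hs2)]
    -- Bound `-t²` by its tangent at `t = s - 1`; what remains is increasing in `t`.
    calc 2 * s * (1 / 10 + 2 * s - 4 / 3 * s ^ 2 + 8 / 3 * t * (s - 1) - 16 / 15 * t ^ 2)
        ≤ 2 * s * (1 / 10 + 2 * s - 4 / 3 * s ^ 2 + 8 / 15 * t * (s - 1)
            + 16 / 15 * (s - 1) ^ 2) := by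
          refine mul_le_mul_of_nonneg_left ?_ (by positivity)
          nlinarith [sq_nonneg (t - (s - 1))]
      _ ≤ 2 * s * (1 / 10 + 2 * s - 4 / 3 * s ^ 2 + 8 / 15 * (s ^ 2 / 4) * (s - 1)
            + 16 / 15 * (s - 1) ^ 2) := by
          have : 0 ≤ s - 1 := sub_nonneg.2 hs1
          gcongr
      _ = 8 / 5 - 11 / 960
            - (s - 5 / 4) ^ 2 * (61 / 60 + 2 / 15 * s - 4 / 15 * s ^ 2) := by ring
      _ ≤ 8 / 5 := by linarith [mul_nonneg (sq_nonneg (s - 5 / 4)) hfactor]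

/-! ### Monotone paths -/

/-- The planar curve `s ↦ (u s, v s)` is nondecreasing in both coordinates and is parametrised by
the coordinate sum. Lines of nonnegative slope are traced by such paths, and the coordinate-sum
parameter treats vertical and horizontal ones alike. -/
structure IsMonotonePath (u v : ℝ → ℝ) : Prop where
  monotone_fst : Monotone u
  monotone_snd : Monotone v
  fst_add_snd : ∀ s, u s + v s = s

lemma isMonotonePath_affine {d e : ℝ} (hd : 0 ≤ d) (he : 0 ≤ e) (hde : d + e = 1) (k : ℝ) :
    IsMonotonePath (fun s ↦ k + d * s) (fun s ↦ -k + e * s) where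
  monotone_fst _ _ hst := by dsimp only; gcongr
  monotone_snd _ _ hst := by dsimp only; gcongr
  fst_add_snd s := by linear_combination s * hde

namespace IsMonotonePath

variable {u v : ℝ → ℝ}

lemma swap (hγ : IsMonotonePath u v) : IsMonotonePath v u :=
  ⟨hγ.monotone_snd, hγ.monotone_fst, fun s ↦ by rw [add_comm, hγ.fst_add_snd]⟩

lemma reverse (hγ : IsMonotonePath u v) :
    IsMonotonePath (fun s ↦ -u (-s)) (fun s ↦ -v (-s)) where
  monotone_fst _ _ hst := neg_le_neg (hγ.monotone_fst (neg_le_neg hst))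
  monotone_snd _ _ hst := neg_le_neg (hγ.monotone_snd (neg_le_neg hst))
  fst_add_snd s := by linarith [hγ.fst_add_snd (-s)]

lemma abs_sub_add_abs_sub (hγ : IsMonotonePath u v) (s t : ℝ) :
    |u s - u t| + |v s - v t| = |s - t| := by
  have hsum : (u s - u t) + (v s - v t) = s - t := by
    linarith [hγ.fst_add_snd s, hγ.fst_add_snd t]
  rcases le_total s t with hst | hst
  · rw [abs_of_nonpos (sub_nonpos.2 (hγ.monotone_fst hst)),
      abs_of_nonpos (sub_nonpos.2 (hγ.monotone_snd hst)), abs_of_nonpos (sub_nonpos.2 hst)]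
    linarith
  · rw [abs_of_nonneg (sub_nonneg.2 (hγ.monotone_fst hst)),
      abs_of_nonneg (sub_nonneg.2 (hγ.monotone_snd hst)), abs_of_nonneg (sub_nonneg.2 hst), hsum]

lemma abs_sub_coord_sum_le (hγ : IsMonotonePath u v) {t x y r : ℝ} (hx : |u t - x| ≤ r)
    (hy : |v t - y| ≤ r) : |t - (x + y)| ≤ 2 * r := by
  calc |t - (x + y)| = |(u t - x) + (v t - y)| := by
        rw [sub_add_sub_comm, hγ.fst_add_snd]
    _ ≤ |u t - x| + |v t - y| := abs_add_le _ _
    _ ≤ 2 * r := by linarith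

lemma abs_coord_sub_add_le (hγ : IsMonotonePath u v) {s t x y r : ℝ} (hx : |u t - x| ≤ r)
    (hy : |v t - y| ≤ r) (hs : |s - (x + y)| ≤ r) : |x - u s| + |y - v s| ≤ 5 * r := by
  have hst : |t - s| ≤ 3 * r := by
    linarith [abs_sub_le t (x + y) s, hγ.abs_sub_coord_sum_le hx hy, abs_sub_comm s (x + y)]
  rw [← hγ.abs_sub_add_abs_sub] at hst
  linarith [abs_sub_le x (u t) (u s), abs_sub_le y (v t) (v s), abs_sub_comm x (u t),
    abs_sub_comm y (v t)]

lemma continuous_fst (hγ : IsMonotonePath u v) : Continuous u := by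
  refine (LipschitzWith.of_dist_le_mul (K := 1) fun s t ↦ ?_).continuous
  rw [Real.dist_eq, Real.dist_eq, NNReal.coe_one, one_mul, ← hγ.abs_sub_add_abs_sub s t]
  linarith [abs_nonneg (v s - v t)]

lemma exists_last_mem_square (hγ : IsMonotonePath u v) (hne : ∃ s, |u s| ≤ 1 ∧ |v s| ≤ 1) :
    ∃ b, (|u b| ≤ 1 ∧ |v b| ≤ 1) ∧ (u b = 1 ∨ v b = 1) ∧
      ∀ s, |u s| ≤ 1 → |v s| ≤ 1 → s ≤ b := by
  have hu := hγ.continuous_fst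
  have hv := hγ.swap.continuous_fst
  have hcompact : IsCompact {s | |u s| ≤ 1 ∧ |v s| ≤ 1} := by
    refine (isCompact_Icc (a := -2) (b := 2)).of_isClosed_subset ?_ fun s ⟨hus, hvs⟩ ↦ ?_
    · exact (isClosed_le hu.abs continuous_const).inter (isClosed_le hv.abs continuous_const)
    · rw [abs_le] at hus hvs
      constructor <;> linarith [hγ.fst_add_snd s]
  obtain ⟨b, ⟨hub, hvb⟩, hlast⟩ := hcompact.exists_isGreatest hne
  refine ⟨b, ⟨hub, hvb⟩, ?_, fun s hus hvs ↦ hlast ⟨hus, hvs⟩⟩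
  by_contra! hinside
  have hlt : ∀ᶠ s in nhdsWithin b (Set.Ioi b), u s < 1 ∧ v s < 1 :=
    ((hu.continuousAt.eventually_lt_const (lt_of_le_of_ne (abs_le.1 hub).2 hinside.1)).and
      (hv.continuousAt.eventually_lt_const
        (lt_of_le_of_ne (abs_le.1 hvb).2 hinside.2))).filter_mono nhdsWithin_le_nhds
  obtain ⟨s, ⟨hus, hvs⟩, hbs : b < s⟩ := (hlt.and self_mem_nhdsWithin).exists
  exact hbs.not_ge (hlast
    ⟨abs_le.2 ⟨(abs_le.1 hub).1.trans (hγ.monotone_fst hbs.le), hus.le⟩,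
      abs_le.2 ⟨(abs_le.1 hvb).1.trans (hγ.monotone_snd hbs.le), hvs.le⟩⟩)

lemma exists_first_mem_square (hγ : IsMonotonePath u v) (hne : ∃ s, |u s| ≤ 1 ∧ |v s| ≤ 1) :
    ∃ a, (|u a| ≤ 1 ∧ |v a| ≤ 1) ∧ (u a = -1 ∨ v a = -1) ∧
      ∀ s, |u s| ≤ 1 → |v s| ≤ 1 → a ≤ s := by
  obtain ⟨s₀, hs₀⟩ := hne
  obtain ⟨b, hb, hexit, hlast⟩ :=
    hγ.reverse.exists_last_mem_square ⟨-s₀, by simpa only [neg_neg, abs_neg] using hs₀⟩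
  refine ⟨-b, by simpa only [abs_neg] using hb, ?_, fun s hus hvs ↦ ?_⟩
  · exact hexit.imp (fun h ↦ by linarith) fun h ↦ by linarith
  · linarith [hlast (-s) (by simpa only [neg_neg, abs_neg] using hus)
      (by simpa only [neg_neg, abs_neg] using hvs)]

end IsMonotonePath

section AffineSegment

variable {d e k a b : ℝ}

lemma integral_density_affine_eq (hd : 0 ≤ d) (he : 0 ≤ e) (hab : a ≤ b)
    (ha : -1 ≤ k + d * a ∧ -1 ≤ -k + e * a) (hb : k + d * b ≤ 1 ∧ -k + e * b ≤ 1) :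
    ∫ s in a..b, density (k + d * s) (-k + e * s) =
      (b - a) * segmentMean (k + d * ((a + b) / 2)) (-k + e * ((a + b) / 2))
        (d * ((b - a) / 2)) (e * ((b - a) / 2)) := by
  have hmem : ∀ t ∈ Set.uIcc (-((b - a) / 2)) ((b - a) / 2),
      |k + d * ((a + b) / 2) + d * t| ≤ 1 ∧ |-k + e * ((a + b) / 2) + e * t| ≤ 1 := by
    intro t ht
    rw [Set.uIcc_of_le (by linarith)] at ht
    have hdl := mul_le_mul_of_nonneg_left ht.1 hd
    have hdr := mul_le_mul_of_nonneg_left ht.2 hd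
    have hel := mul_le_mul_of_nonneg_left ht.1 he
    have her := mul_le_mul_of_nonneg_left ht.2 he
    exact ⟨abs_le.2 ⟨by linarith, by linarith⟩, abs_le.2 ⟨by linarith, by linarith⟩⟩
  have hu (s : ℝ) : k + d * ((a + b) / 2) + d * (s - (a + b) / 2) = k + d * s := by ring
  have hv (s : ℝ) : -k + e * ((a + b) / 2) + e * (s - (a + b) / 2) = -k + e * s := by ring
  have hmean := integral_density_eq_mul_segmentMean (m := (a + b) / 2) hmem
  simp only [hu, hv] at hmean
  convert hmean using 2 <;> ring

lemma integral_density_affine_le_of_left (hd : 0 ≤ d) (he : 0 ≤ e) (hde : d + e = 1) (hab : a ≤ b)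
    (hleft : k + d * a = -1) (ha : -1 ≤ -k + e * a) (hb : k + d * b ≤ 1 ∧ -k + e * b ≤ 1)
    (hexit : k + d * b = 1 ∨ -k + e * b = 1) :
    ∫ s in a..b, density (k + d * s) (-k + e * s) ≤ 8 / 5 := by
  obtain ⟨p, hp⟩ : ∃ p, p = d * ((b - a) / 2) := ⟨_, rfl⟩
  obtain ⟨q, hq⟩ : ∃ q, q = e * ((b - a) / 2) := ⟨_, rfl⟩
  have hp0 : 0 ≤ p := hp ▸ mul_nonneg hd (by linarith)
  have hq0 : 0 ≤ q := hq ▸ mul_nonneg he (by linarith)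
  have hlength : b - a = 2 * (p + q) := by linear_combination -(b - a) * hde - 2 * hp - 2 * hq
  rw [integral_density_affine_eq hd he hab ⟨hleft.ge, ha⟩ hb, ← hp, ← hq, hlength]
  rcases hexit with hright | htop
  · have hp1 : p = 1 := by linarith
    have hx : k + d * ((a + b) / 2) = 0 := by linarith
    rw [hp1, hx]
    exact segmentMean_left_right_le hq0 (abs_le.2 ⟨by linarith, by linarith⟩)
  · have hx : k + d * ((a + b) / 2) = p - 1 := by linarith
    have hy : -k + e * ((a + b) / 2) = 1 - q := by linarith
    rw [hx, hy]
    exact segmentMean_left_top_le hp0 hq0 (by linarith) (by linarith)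

lemma integral_density_affine_le (hd : 0 ≤ d) (he : 0 ≤ e) (hde : d + e = 1) (hab : a ≤ b)
    (ha : -1 ≤ k + d * a ∧ -1 ≤ -k + e * a) (hb : k + d * b ≤ 1 ∧ -k + e * b ≤ 1)
    (henter : k + d * a = -1 ∨ -k + e * a = -1) (hexit : k + d * b = 1 ∨ -k + e * b = 1) :
    ∫ s in a..b, density (k + d * s) (-k + e * s) ≤ 8 / 5 := by
  rcases henter with hleft | hbottom
  · exact integral_density_affine_le_of_left hd he hde hab hleft ha.2 hb hexit
  · have hswap := integral_density_affine_le_of_left (k := -k) he hd (by linarith) hab hbottom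
      (by linarith) ⟨hb.2, by linarith⟩ (by rwa [neg_neg, or_comm])
    simpa only [neg_neg, density_swap] using hswap

end AffineSegment

/-! ### Weights picked up by a monotone path -/

lemma sum_mul_le_integral_of_separated {ι : Type*} {S : Finset ι} {z w : ι → ℝ} {g : ℝ → ℝ}
    {a b h : ℝ} (hab : a ≤ b) (hh : 0 ≤ h)
    (hg : MeasureTheory.IntegrableOn g (Set.Ioc a b)) (hg0 : ∀ s, 0 ≤ g s)
    (hsep : ∀ c ∈ S, ∀ c' ∈ S, c ≠ c' → h ≤ |z c - z c'|)
    (hmem : ∀ c ∈ S, a ≤ z c - h / 2 ∧ z c + h / 2 ≤ b)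
    (hw : ∀ c ∈ S, ∀ s, |s - z c| ≤ h / 2 → w c ≤ g s) :
    ∑ c ∈ S, w c * h ≤ ∫ s in a..b, g s := by
  have hdisj : (S : Set ι).PairwiseDisjoint fun c ↦ Set.Ioc (z c - h / 2) (z c + h / 2) := by
    intro c hc c' hc' hne
    refine Set.disjoint_left.2 fun s ⟨hcs, hsc⟩ ⟨hcs', hsc'⟩ ↦ (hsep c hc c' hc' hne).not_gt ?_
    exact abs_lt.2 ⟨by linarith, by linarith⟩
  have hsub : ∀ c ∈ S, Set.Ioc (z c - h / 2) (z c + h / 2) ⊆ Set.Ioc a b :=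
    fun c hc ↦ Set.Ioc_subset_Ioc (hmem c hc).1 (hmem c hc).2
  have hpiece : ∀ c ∈ S, w c * h ≤ ∫ s in Set.Ioc (z c - h / 2) (z c + h / 2), g s := by
    intro c hc
    calc w c * h = ∫ _ in Set.Ioc (z c - h / 2) (z c + h / 2), w c := by
          rw [MeasureTheory.setIntegral_const, Real.volume_real_Ioc_of_le (by linarith),
            smul_eq_mul]
          ring
      _ ≤ _ := MeasureTheory.setIntegral_mono_on continuous_const.integrableOn_Ioc
          (hg.mono_set (hsub c hc)) measurableSet_Ioc fun s hs ↦
            hw c hc s (abs_le.2 ⟨by linarith [hs.1], by linarith [hs.2]⟩)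
  calc ∑ c ∈ S, w c * h
      ≤ ∑ c ∈ S, ∫ s in Set.Ioc (z c - h / 2) (z c + h / 2), g s := Finset.sum_le_sum hpiece
    _ = ∫ s in ⋃ c ∈ S, Set.Ioc (z c - h / 2) (z c + h / 2), g s :=
        (MeasureTheory.integral_biUnion_finset S (fun _ _ ↦ measurableSet_Ioc) hdisj
          fun c hc ↦ hg.mono_set (hsub c hc)).symm
    _ ≤ ∫ s in Set.Ioc a b, g s :=
        MeasureTheory.setIntegral_mono_set hg (Filter.Eventually.of_forall hg0)
          (Set.iUnion₂_subset hsub).eventuallyLE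
    _ = ∫ s in a..b, g s := (intervalIntegral.integral_of_le hab).symm

lemma integral_add_const_enlarge_le {f : ℝ → ℝ} {a b r B δ : ℝ} (hf : Continuous f) (hr : 0 ≤ r)
    (hB : ∀ s, f s ≤ B) :
    ∫ s in (a - r)..(b + r), (f s + δ) ≤
      (∫ s in a..b, f s) + 2 * r * B + (b - a + 2 * r) * δ := by
  have hint (p q : ℝ) : IntervalIntegrable f MeasureTheory.volume p q := hf.intervalIntegrable p q
  have hend (p : ℝ) : ∫ s in p..(p + r), f s ≤ r * B := by
    calc ∫ s in p..(p + r), f s ≤ ∫ _ in p..(p + r), B :=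
          intervalIntegral.integral_mono_on (by linarith) (hint _ _) intervalIntegrable_const
            fun s _ ↦ hB s
      _ = r * B := by rw [intervalIntegral.integral_const, add_sub_cancel_left, smul_eq_mul]
  have hleft := hend (a - r)
  rw [sub_add_cancel] at hleft
  rw [intervalIntegral.integral_add (hint _ _) intervalIntegrable_const,
    intervalIntegral.integral_const, smul_eq_mul,
    ← intervalIntegral.integral_add_adjacent_intervals (hint _ a) (hint a _),
    ← intervalIntegral.integral_add_adjacent_intervals (hint a b) (hint b _)]
  linarith [hend b]

/-- The coordinate, on either axis, of the centres of the cells in column or row `i`. -/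
noncomputable def cellCenter (n i : ℕ) : ℝ := (2 * i - 1 - n) / n

lemma mem_interior_cell_iff {n i j : ℕ} {p : ℝ × ℝ} (hn : 0 < n) :
    p ∈ interior (cell n i j) ↔
      |p.1 - cellCenter n i| < 1 / n ∧ |p.2 - cellCenter n j| < 1 / n := by
  have hn' : (n : ℝ) ≠ 0 := by positivity
  have hlower (l : ℕ) : -1 + ((l : ℝ) - 1) * (2 / n) = cellCenter n l - 1 / n := by
    unfold cellCenter
    field_simp
    ring
  have hupper (l : ℕ) : -1 + (l : ℝ) * (2 / n) = cellCenter n l + 1 / n := by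
    unfold cellCenter
    field_simp
    ring
  rw [cell, interior_prod_eq, interior_Icc, interior_Icc, hlower, hlower, hupper, hupper,
    Set.mem_prod, Set.mem_Ioo, Set.mem_Ioo, abs_sub_lt_iff, abs_sub_lt_iff]
  constructor <;> rintro ⟨⟨h₁, h₂⟩, h₃, h₄⟩ <;> refine ⟨⟨?_, ?_⟩, ?_, ?_⟩ <;> linarith

lemma abs_cellCenter_le {n i : ℕ} (hi : i ∈ Finset.Icc 1 n) : |cellCenter n i| ≤ 1 - 1 / n := by
  obtain ⟨hi₁, hin⟩ := Finset.mem_Icc.1 hi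
  have hn : (0 : ℝ) < n := by exact_mod_cast hi₁.trans hin
  have hi₁' : (1 : ℝ) ≤ i := by exact_mod_cast hi₁
  have hin' : (i : ℝ) ≤ n := by exact_mod_cast hin
  rw [cellCenter, abs_div, abs_of_pos hn, div_le_iff₀ hn, sub_mul, one_div_mul_cancel hn.ne']
  exact abs_le.2 ⟨by linarith, by linarith⟩

lemma cellCenter_reflect {n j : ℕ} (hj : j ≤ n + 1) :
    cellCenter n (n + 1 - j) = -cellCenter n j := by
  rw [cellCenter, cellCenter, Nat.cast_sub hj]
  push_cast
  ring

lemma index_le_of_mem_strip {n i j : ℕ} {x y : ℝ} (hn : 0 < n) (hxy : x ≤ y)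
    (hx : |x - cellCenter n i| < 1 / n) (hy : |y - cellCenter n j| < 1 / n) : i ≤ j := by
  have hn' : (0 : ℝ) < n := by exact_mod_cast hn
  have hlt : cellCenter n i - cellCenter n j < 2 / n := by
    have : 2 / (n : ℝ) = 1 / n + 1 / n := by ring
    linarith [(abs_lt.1 hx).1, (abs_lt.1 hy).2]
  rw [cellCenter, cellCenter, ← sub_div, div_lt_div_iff_of_pos_right hn'] at hlt
  have : (i : ℝ) < j + 1 := by linarith
  exact Nat.lt_succ_iff.1 (by exact_mod_cast this)

namespace IsMonotonePath

variable {u v : ℝ → ℝ}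

lemma spacing_le_of_ne (hγ : IsMonotonePath u v) {n : ℕ} (hn : 0 < n) {c c' : ℕ × ℕ} {t t' : ℝ}
    (hc : |u t - cellCenter n c.1| < 1 / n ∧ |v t - cellCenter n c.2| < 1 / n)
    (hc' : |u t' - cellCenter n c'.1| < 1 / n ∧ |v t' - cellCenter n c'.2| < 1 / n)
    (hne : c ≠ c') :
    2 / (n : ℝ) ≤ |(cellCenter n c.1 + cellCenter n c.2)
      - (cellCenter n c'.1 + cellCenter n c'.2)| := by
  wlog htt' : t ≤ t' generalizing c c' t t'
  · rw [abs_sub_comm]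
    exact this hc' hc hne.symm (le_of_not_ge htt')
  have h₁ := index_le_of_mem_strip hn (hγ.monotone_fst htt') hc.1 hc'.1
  have h₂ := index_le_of_mem_strip hn (hγ.monotone_snd htt') hc.2 hc'.2
  have hlt : c.1 + c.2 + 1 ≤ c'.1 + c'.2 := by
    by_contra! hcon
    exact hne (Prod.ext (by omega) (by omega))
  have hlt' : (c.1 + c.2 + 1 : ℝ) ≤ c'.1 + c'.2 := by exact_mod_cast hlt
  rw [abs_sub_comm]
  refine le_trans ?_ (le_abs_self _)
  simp only [cellCenter, ← add_div, ← sub_div]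
  gcongr
  linarith

lemma sum_weight_mul_le_of_separated (hγ : IsMonotonePath u v) {w : ℝ → ℝ → ℝ} {B K : ℝ}
    (hK : 0 ≤ K) (hw0 : ∀ x y, 0 ≤ w x y) (hwB : ∀ x y, w x y ≤ B)
    (hwK : ∀ x y x' y', |w x y - w x' y'| ≤ K * (|x - x'| + |y - y'|)) {h a b : ℝ}
    (hh0 : 0 ≤ h) (hh2 : h ≤ 2) (hab : a ≤ b) (hba : b - a ≤ 4) {ι : Type*} {S : Finset ι}
    {x y : ι → ℝ} (hsep : ∀ c ∈ S, ∀ c' ∈ S, c ≠ c' → h ≤ |(x c + y c) - (x c' + y c')|)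
    (hS : ∀ c ∈ S, ∃ t ∈ Set.Icc a b, |u t - x c| ≤ h / 2 ∧ |v t - y c| ≤ h / 2) :
    ∑ c ∈ S, w (x c) (y c) * h ≤ (∫ s in a..b, w (u s) (v s)) + (4 * B + 30 * K) * h := by
  choose! t htab hx hy using hS
  have hcont : Continuous fun s ↦ w (u s) (v s) :=
    (LipschitzWith.of_dist_le_mul (K := ⟨K, hK⟩) fun s t ↦
      (hwK _ _ _ _).trans_eq (by rw [hγ.abs_sub_add_abs_sub]; rfl)).continuous
  have hweight : ∀ c ∈ S, ∀ s, |s - (x c + y c)| ≤ h / 2 →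
      w (x c) (y c) ≤ w (u s) (v s) + K * (5 * (h / 2)) := by
    intro c hc s hs
    have hdist := hγ.abs_coord_sub_add_le (hx c hc) (hy c hc) hs
    linarith [le_abs_self (w (x c) (y c) - w (u s) (v s)), hwK (x c) (y c) (u s) (v s),
      mul_le_mul_of_nonneg_left hdist hK]
  have hmem : ∀ c ∈ S, a - 2 * h ≤ x c + y c - h / 2 ∧ x c + y c + h / 2 ≤ b + 2 * h := by
    intro c hc
    obtain ⟨hat, htb⟩ := htab c hc
    obtain ⟨hlo, hhi⟩ := abs_le.1 (hγ.abs_sub_coord_sum_le (hx c hc) (hy c hc))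
    constructor <;> linarith
  calc ∑ c ∈ S, w (x c) (y c) * h
      ≤ ∫ s in (a - 2 * h)..(b + 2 * h), (w (u s) (v s) + K * (5 * (h / 2))) :=
        sum_mul_le_integral_of_separated (by linarith) hh0
          (hcont.add continuous_const).integrableOn_Ioc
          (fun s ↦ add_nonneg (hw0 _ _) (by positivity)) hsep hmem hweight
    _ ≤ (∫ s in a..b, w (u s) (v s)) + 2 * (2 * h) * B
          + (b - a + 2 * (2 * h)) * (K * (5 * (h / 2))) :=
        integral_add_const_enlarge_le hcont (by positivity) fun s ↦ hwB _ _
    _ ≤ (∫ s in a..b, w (u s) (v s)) + 2 * (2 * h) * B + 12 * (K * (5 * (h / 2))) := by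
        gcongr
        linarith
    _ = (∫ s in a..b, w (u s) (v s)) + (4 * B + 30 * K) * h := by ring

end IsMonotonePath

/-! ### The weight pierced by a line -/

/-- The weight of the `(i, j)` cell: the density at its centre times the side of a cell. -/
noncomputable def cellWeight (n : ℕ) (c : ℕ × ℕ) : ℝ :=
  density (cellCenter n c.1) (cellCenter n c.2) * (2 / n)

lemma cellWeight_nonneg (n : ℕ) (c : ℕ × ℕ) : 0 ≤ cellWeight n c :=
  mul_nonneg (density_nonneg _ _) (by positivity)

lemma cellWeight_reflect {n : ℕ} {c : ℕ × ℕ} (hc : c ∈ Idx n) :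
    cellWeight n (c.1, n + 1 - c.2) = cellWeight n c := by
  have hj : c.2 ≤ n + 1 := by
    have := Finset.mem_Icc.1 (Finset.mem_product.1 hc).2
    omega
  simp only [cellWeight, density, cellCenter_reflect hj, clippedSq_neg]

lemma exists_mem_line_of_mem_filter {n : ℕ} {L : Set (ℝ × ℝ)} {c : ℕ × ℕ}
    (hc : c ∈ (Idx n).filter fun c ↦ Pierces L (cell n c.1 c.2)) :
    ∃ p ∈ L, (|p.1 - cellCenter n c.1| < 1 / n ∧ |p.2 - cellCenter n c.2| < 1 / n) ∧
      |p.1| ≤ 1 ∧ |p.2| ≤ 1 := by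
  obtain ⟨hidx, p, hpL, hp⟩ := Finset.mem_filter.1 hc
  obtain ⟨hi, hj⟩ := Finset.mem_product.1 hidx
  have hn : 0 < n := by
    have := Finset.mem_Icc.1 hi
    omega
  rw [mem_interior_cell_iff hn] at hp
  refine ⟨p, hpL, hp, ?_, ?_⟩
  · linarith [abs_sub_abs_le_abs_sub p.1 (cellCenter n c.1), abs_cellCenter_le hi, hp.1]
  · linarith [abs_sub_abs_le_abs_sub p.2 (cellCenter n c.2), abs_cellCenter_le hj, hp.2]

lemma sum_cellWeight_le_of_affine {n : ℕ} (hn : 0 < n) {d e : ℝ} (hd : 0 ≤ d) (he : 0 ≤ e)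
    (hde : d + e = 1) (k : ℝ) {S : Finset (ℕ × ℕ)}
    (hS : ∀ c ∈ S, ∃ t,
      (|k + d * t - cellCenter n c.1| < 1 / n ∧ |-k + e * t - cellCenter n c.2| < 1 / n) ∧
        |k + d * t| ≤ 1 ∧ |-k + e * t| ≤ 1) :
    ∑ c ∈ S, cellWeight n c ≤ 8 / 5 + 130 / n := by
  rcases S.eq_empty_or_nonempty with rfl | ⟨c₀, hc₀⟩
  · rw [Finset.sum_empty]
    positivity
  have hγ := isMonotonePath_affine hd he hde k
  have hne : ∃ s, |k + d * s| ≤ 1 ∧ |-k + e * s| ≤ 1 := (hS c₀ hc₀).imp fun _ ↦ And.right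
  obtain ⟨a, ⟨hua, hva⟩, henter, hfirst⟩ := hγ.exists_first_mem_square hne
  obtain ⟨b, ⟨hub, hvb⟩, hexit, hlast⟩ := hγ.exists_last_mem_square hne
  have hab : a ≤ b := hfirst b hub hvb
  have hsep : ∀ c ∈ S, ∀ c' ∈ S, c ≠ c' → 2 / (n : ℝ) ≤
      |(cellCenter n c.1 + cellCenter n c.2) - (cellCenter n c'.1 + cellCenter n c'.2)| := by
    intro c hc c' hc'
    obtain ⟨t, ht, -⟩ := hS c hc
    obtain ⟨t', ht', -⟩ := hS c' hc'
    exact hγ.spacing_le_of_ne hn ht ht'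
  have hhalf : 1 / (n : ℝ) = 2 / n / 2 := by ring
  have hSab : ∀ c ∈ S, ∃ t ∈ Set.Icc a b,
      |k + d * t - cellCenter n c.1| ≤ 2 / n / 2 ∧ |-k + e * t - cellCenter n c.2| ≤ 2 / n / 2 := by
    intro c hc
    obtain ⟨t, ht, hut, hvt⟩ := hS c hc
    exact ⟨t, ⟨hfirst t hut hvt, hlast t hut hvt⟩, hhalf ▸ ht.1.le, hhalf ▸ ht.2.le⟩
  rw [abs_le] at hua hva hub hvb
  have hba : b - a ≤ 4 := by linarith [hγ.fst_add_snd a, hγ.fst_add_snd b]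
  calc ∑ c ∈ S, cellWeight n c
      ≤ (∫ s in a..b, density (k + d * s) (-k + e * s)) + (4 * (11 / 10) + 30 * 2) * (2 / n) :=
        hγ.sum_weight_mul_le_of_separated zero_le_two density_nonneg density_le abs_density_sub_le
          (by positivity) (div_le_self zero_le_two (by exact_mod_cast hn)) hab hba hsep hSab
    _ ≤ 8 / 5 + 65 * (2 / n) := by
        gcongr
        · exact integral_density_affine_le hd he hde hab ⟨hua.1, hva.1⟩ ⟨hub.2, hvb.2⟩ henter hexit
        · norm_num
    _ = 8 / 5 + 130 / n := by ring

lemma sum_cellWeight_le_of_rising {n : ℕ} (hn : 0 < n) {L : Set (ℝ × ℝ)} {d e k : ℝ}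
    (hd : 0 ≤ d) (he : 0 ≤ e) (hde : d + e = 1) (hL : ∀ p ∈ L, e * p.1 - d * p.2 = k) :
    ∑ c ∈ Idx n with Pierces L (cell n c.1 c.2), cellWeight n c ≤ 8 / 5 + 130 / n := by
  refine sum_cellWeight_le_of_affine hn hd he hde k fun c hc ↦ ?_
  obtain ⟨p, hpL, hp⟩ := exists_mem_line_of_mem_filter hc
  have hfst : k + d * (p.1 + p.2) = p.1 := by linear_combination -hL p hpL + p.1 * hde
  have hsnd : -k + e * (p.1 + p.2) = p.2 := by linear_combination hL p hpL + p.2 * hde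
  exact ⟨p.1 + p.2, by rwa [hfst, hsnd]⟩

lemma IsLine.exists_normal_form {L : Set (ℝ × ℝ)} (hL : IsLine L) :
    ∃ d e k : ℝ, 0 ≤ d ∧ 0 ≤ e ∧ d + e = 1 ∧
      ((∀ p ∈ L, e * p.1 - d * p.2 = k) ∨ ∀ p ∈ L, e * p.1 + d * p.2 = k) := by
  obtain ⟨a, b, c, hab, rfl⟩ := hL
  simp only [Set.mem_ofPred_eq]
  wlog ha : 0 ≤ a generalizing a b c
  · have hneg : (-a, -b) ≠ (0, 0) := by simpa only [ne_eq, Prod.mk.injEq, neg_eq_zero] using hab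
    simpa only [neg_mul, ← neg_add, neg_inj] using this (-a) (-b) (-c) hneg (by linarith)
  have hpos : 0 < a + |b| := by
    refine lt_of_le_of_ne (by positivity) fun h ↦ hab (Prod.ext ?_ (abs_nonpos_iff.1 ?_))
    · dsimp only
      linarith [abs_nonneg b]
    · dsimp only
      linarith
  refine ⟨|b| / (a + |b|), a / (a + |b|), c / (a + |b|), by positivity, by positivity,
    by field_simp; ring, ?_⟩
  rcases le_total b 0 with hb | hb
  · refine Or.inl fun p hp ↦ ?_
    rw [abs_of_nonpos hb, ← hp]
    ring
  · refine Or.inr fun p hp ↦ ?_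
    rw [abs_of_nonneg hb, ← hp]
    ring

lemma reflect_mem_idx {n : ℕ} {c : ℕ × ℕ} (hc : c ∈ Idx n) : (c.1, n + 1 - c.2) ∈ Idx n := by
  simp only [Idx, Finset.mem_product, Finset.mem_Icc] at hc ⊢
  omega

lemma pierces_reflect_iff {n i j : ℕ} (hn : 0 < n) (hj : j ≤ n + 1) {L : Set (ℝ × ℝ)} :
    Pierces {p | (p.1, -p.2) ∈ L} (cell n i (n + 1 - j)) ↔ Pierces L (cell n i j) := by
  have habs (y : ℝ) : |-y - cellCenter n (n + 1 - j)| = |y - cellCenter n j| := by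
    rw [cellCenter_reflect hj, neg_sub_neg, abs_sub_comm]
  constructor
  · rintro ⟨p, hpL, hp⟩
    refine ⟨(p.1, -p.2), hpL, ?_⟩
    rw [mem_interior_cell_iff hn] at hp ⊢
    rwa [← habs, neg_neg]
  · rintro ⟨p, hpL, hp⟩
    refine ⟨(p.1, -p.2), by rwa [Set.mem_ofPred_eq, neg_neg], ?_⟩
    rw [mem_interior_cell_iff hn] at hp ⊢
    rwa [habs]

lemma sum_cellWeight_reflect {n : ℕ} (hn : 0 < n) (L : Set (ℝ × ℝ)) :
    ∑ c ∈ Idx n with Pierces {p | (p.1, -p.2) ∈ L} (cell n c.1 c.2), cellWeight n c =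
      ∑ c ∈ Idx n with Pierces L (cell n c.1 c.2), cellWeight n c := by
  have hle : ∀ c ∈ Idx n, c.2 ≤ n + 1 := fun c hc ↦
    (Finset.mem_Icc.1 (Finset.mem_product.1 hc).2).2.trans n.le_succ
  have hinvol : ∀ c ∈ Idx n, (c.1, n + 1 - (n + 1 - c.2)) = c := fun c hc ↦
    Prod.ext rfl (Nat.sub_sub_self (hle c hc))
  rw [Finset.sum_filter, Finset.sum_filter]
  refine (Finset.sum_nbij' (fun c ↦ (c.1, n + 1 - c.2)) (fun c ↦ (c.1, n + 1 - c.2))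
    (fun _ ↦ reflect_mem_idx) (fun _ ↦ reflect_mem_idx) hinvol hinvol fun c hc ↦ ?_).symm
  simp only [pierces_reflect_iff hn (hle c hc), cellWeight_reflect hc]

lemma sum_cellWeight_le {n : ℕ} (hn : 0 < n) {L : Set (ℝ × ℝ)} (hL : IsLine L) :
    ∑ c ∈ Idx n with Pierces L (cell n c.1 c.2), cellWeight n c ≤ 8 / 5 + 130 / n := by
  obtain ⟨d, e, k, hd, he, hde, hrising | hfalling⟩ := hL.exists_normal_form
  · exact sum_cellWeight_le_of_rising hn hd he hde hrising
  · rw [← sum_cellWeight_reflect hn]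
    exact sum_cellWeight_le_of_rising hn hd he hde (k := k) fun p hp ↦ by
      linear_combination hfalling _ hp

/-! ### Duality -/

lemma sum_le_card_nsmul_of_cover {α β M : Type*} [AddCommMonoid M] [PartialOrder M]
    [IsOrderedAddMonoid M] {A : Finset α} {F : Finset β} {r : β → α → Prop} {w : α → M} {B : M}
    (hw : ∀ a ∈ A, 0 ≤ w a) (hcover : ∀ a ∈ A, ∃ b ∈ F, r b a)
    (hB : ∀ b ∈ F, ∑ a ∈ A with r b a, w a ≤ B) :
    ∑ a ∈ A, w a ≤ F.card • B := by
  have hcount : ∀ a ∈ A, w a ≤ ∑ b ∈ F, if r b a then w a else 0 := by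
    intro a ha
    obtain ⟨b, hb, hba⟩ := hcover a ha
    calc w a = if r b a then w a else 0 := (if_pos hba).symm
      _ ≤ ∑ b ∈ F, if r b a then w a else 0 :=
        Finset.single_le_sum (f := fun b ↦ if r b a then w a else 0)
          (fun b _ ↦ ite_nonneg (hw a ha) le_rfl) hb
  calc ∑ a ∈ A, w a ≤ ∑ a ∈ A, ∑ b ∈ F, if r b a then w a else 0 := Finset.sum_le_sum hcount
    _ = ∑ b ∈ F, ∑ a ∈ A with r b a, w a := by
        rw [Finset.sum_comm]
        simp only [Finset.sum_filter]
    _ ≤ F.card • B := Finset.sum_le_card_nsmul _ _ _ hB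

lemma sum_sq_two_mul_sub_one_sub (m : ℕ) (c : ℝ) :
    ∑ i ∈ Finset.Icc 1 m, (2 * (i : ℝ) - 1 - c) ^ 2 =
      m * (4 * m ^ 2 - 1) / 3 - 2 * c * m ^ 2 + m * c ^ 2 := by
  induction m with
  | zero => simp
  | succ m ih =>
    rw [Finset.sum_Icc_succ_top (Nat.le_add_left 1 m), ih]
    push_cast
    ring

lemma sum_sq_cellCenter {n : ℕ} (hn : 0 < n) :
    ∑ i ∈ Finset.Icc 1 n, cellCenter n i ^ 2 = ((n : ℝ) ^ 2 - 1) / (3 * n) := by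
  have hn' : (n : ℝ) ≠ 0 := by positivity
  simp only [cellCenter, div_pow]
  rw [← Finset.sum_div, sum_sq_two_mul_sub_one_sub]
  field_simp
  ring

lemma sum_density_eq {n : ℕ} (hn : 0 < n) :
    ∑ c ∈ Idx n, density (cellCenter n c.1) (cellCenter n c.2) =
      49 / 90 * n ^ 2 - 2 / 9 - 2 / (9 * n ^ 2) := by
  have hn' : (n : ℝ) ≠ 0 := by positivity
  have habs {i : ℕ} (hi : i ∈ Finset.Icc 1 n) : |cellCenter n i| ≤ 1 :=
    (abs_cellCenter_le hi).trans (sub_le_self _ (by positivity))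
  calc ∑ c ∈ Idx n, density (cellCenter n c.1) (cellCenter n c.2)
      = ∑ i ∈ Finset.Icc 1 n, ∑ j ∈ Finset.Icc 1 n, (1 / 10 + cellCenter n i ^ 2
          + cellCenter n j ^ 2 - 2 * cellCenter n i ^ 2 * cellCenter n j ^ 2) := by
        rw [Idx, Finset.sum_product]
        exact Finset.sum_congr rfl fun i hi ↦ Finset.sum_congr rfl fun j hj ↦
          density_of_abs_le_one (habs hi) (habs hj)
    _ = 49 / 90 * n ^ 2 - 2 / 9 - 2 / (9 * n ^ 2) := by
        simp only [Finset.sum_sub_distrib, Finset.sum_add_distrib, Finset.sum_const, Nat.card_Icc,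
          ← Finset.mul_sum, ← Finset.sum_mul, sum_sq_cellCenter hn, nsmul_eq_mul,
          add_tsub_cancel_right]
        field_simp
        ring

lemma le_sum_cellWeight {n : ℕ} (hn : 0 < n) :
    49 / 45 * (n : ℝ) - 2 / n ≤ ∑ c ∈ Idx n, cellWeight n c := by
  have hn1 : (1 : ℝ) ≤ n := by exact_mod_cast hn
  have hsmall : 2 / (9 * (n : ℝ) ^ 2) ≤ 2 / 9 :=
    div_le_div_of_nonneg_left zero_le_two (by norm_num) (by nlinarith)
  calc 49 / 45 * (n : ℝ) - 2 / n = (49 / 90 * n ^ 2 - 1) * (2 / n) := by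
        field_simp
        ring
    _ ≤ (49 / 90 * n ^ 2 - 2 / 9 - 2 / (9 * n ^ 2)) * (2 / n) := by
        refine mul_le_mul_of_nonneg_right ?_ (by positivity)
        linarith
    _ = ∑ c ∈ Idx n, cellWeight n c := by
        rw [← sum_density_eq hn, Finset.sum_mul]
        rfl

lemma le_card_mul_of_pierces {n : ℕ} (hn : 0 < n) {F : Finset (Set (ℝ × ℝ))}
    (hF : ∀ L ∈ F, IsLine L)
    (hcover : ∀ ij ∈ Idx n, ∃ L ∈ F, Pierces L (cell n ij.1 ij.2)) :
    49 / 45 * (n : ℝ) - 2 / n ≤ F.card * (8 / 5 + 130 / n) := by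
  rw [← nsmul_eq_mul]
  exact (le_sum_cellWeight hn).trans <| sum_le_card_nsmul_of_cover
    (fun c _ ↦ cellWeight_nonneg n c) hcover fun L hL ↦ sum_cellWeight_le hn (hF L hL)

theorem piercing_lower_two_thirds_general {ε : ℝ} (hε : 0 < ε) :
    ∃ N : ℕ, ∀ n ≥ N, ∀ F : Finset (Set (ℝ × ℝ)), (∀ L ∈ F, IsLine L) →
      (∀ ij ∈ Idx n, ∃ L ∈ F, Pierces L (cell n ij.1 ij.2)) →
      (49 / 72 - ε) * n < F.card := by
  refine ⟨max 1 ⌈60 / ε⌉₊, fun n hN F hF hcover ↦ ?_⟩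
  have hn : 1 ≤ n := (le_max_left _ _).trans hN
  have hn1 : (1 : ℝ) ≤ n := by exact_mod_cast hn
  have hlarge : 60 ≤ ε * n := by
    rw [mul_comm, ← div_le_iff₀ hε]
    exact (Nat.le_ceil _).trans (by exact_mod_cast (le_max_right _ _).trans hN)
  by_contra! hcard
  have hbound : 49 / 45 * (n : ℝ) - 2 / n ≤ (49 / 72 - ε) * n * (8 / 5 + 130 / n) :=
    (le_card_mul_of_pierces hn hF hcover).trans (by gcongr)
  have hexpand : (49 / 72 - ε) * n * (8 / 5 + 130 / n) =
      49 / 45 * n - 8 / 5 * (ε * n) + 130 * (49 / 72 - ε) := by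
    field_simp
    ring
  have hlast : 2 / (n : ℝ) ≤ 2 := div_le_self zero_le_two hn1
  linarith

/-- For large `n`, `p_n > 2n/3 - 1`; more precisely `p_n > (2/3 - ε)n` eventually. -/
theorem piercing_lower_two_thirds :
    (∃ N : ℕ, ∀ n ≥ N, ∀ F : Finset (Set (ℝ × ℝ)), (∀ L ∈ F, IsLine L) →
      (∀ ij ∈ Idx n, ∃ L ∈ F, Pierces L (cell n ij.1 ij.2)) →
      2 * (n : ℝ) / 3 - 1 < F.card) ∧
    (∀ ε : ℝ, 0 < ε → ∃ N : ℕ, ∀ n ≥ N, ∀ F : Finset (Set (ℝ × ℝ)),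
      (∀ L ∈ F, IsLine L) →
      (∀ ij ∈ Idx n, ∃ L ∈ F, Pierces L (cell n ij.1 ij.2)) →
      (2 / 3 - ε) * n < F.card) := by
  obtain ⟨N, hN⟩ := piercing_lower_two_thirds_general (ε := 1 / 72) (by norm_num)
  refine ⟨⟨N, fun n hn F hF hcover ↦ ?_⟩, fun ε hε ↦ ⟨N, fun n hn F hF hcover ↦ ?_⟩⟩
  · linarith [hN n hn F hF hcover]
  · linarith [hN n hn F hF hcover, mul_nonneg hε.le n.cast_nonneg]
end
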